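/- Fix ρ > 0, λ ∈ ℝ and α ∈ ℝ, and let (γ_n) be a sequence of positive reals with γ_n/n^α → ρ as n → ∞. Define λ_n = n^(n(α−1))·e^(nλ) and M_n = λ_n·n!·κ_n·(n·κ_n/(2γ_n·κ_{n-1}))ⁿ. Then (1/n)·ln M_n → λ + ln π − ln ρ − 1/2 as n → ∞; consequently M_n → 0 if ρ > e^λ·π/√e, and M_n → ∞ if ρ < e^λ·π/√e. -/

import Mathlib

/-!
Taking logarithms, `(1/n) log M_n` splits into
`(α - 1) log n + λ + (1/n) log n! + (1/n) log κ_n + log n + log (κ_n / κ_{n-1}) - log 2 - log γ_n`.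
The Gamma values enter only through `G = log Γ(n/2 + 1)` and `H = log Γ((n+1)/2)`, and both are
controlled without Stirling's formula for `Γ` at half-integers: Legendre duplication gives
`G + H = log n! - n log 2 + (1/2) log π` (`log_Gamma_half_add`), while log-convexity of `Γ` gives
`(1/2) log (n/2) ≤ G - H ≤ (1/2) log ((n+1)/2)` (`log_Gamma_half_sub_ge`,
`log_Gamma_half_sub_le`). With Stirling's formula for `n!`, all multiples of `log n` cancel and the
limit `L = λ + log π - log ρ - 1/2` remains (`log_M_div_eq` is the exact identity used).
The threshold statements follow from `M_n = exp (n ⬝ (1/n) log M_n)` and the sign of `L`.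
-/

open Filter Real

/-- `κ n`, the volume of the unit ball in `ℝⁿ`. -/
noncomputable def kappa (n : ℕ) : ℝ := Real.pi ^ ((n : ℝ) / 2) / Real.Gamma ((n : ℝ) / 2 + 1)

/-- The Legendre duplication formula at `(n + 1) / 2`, in logarithmic form. -/
lemma log_Gamma_half_add (n : ℕ) :
    log (Gamma ((n : ℝ) / 2 + 1)) + log (Gamma (((n : ℝ) + 1) / 2)) =
      log (n.factorial : ℝ) - n * log 2 + log π / 2 := by
  have h := Real.Gamma_mul_Gamma_add_half (((n : ℝ) + 1) / 2)
  have e1 : ((n : ℝ) + 1) / 2 + 1 / 2 = (n : ℝ) / 2 + 1 := by ring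
  have e2 : 2 * (((n : ℝ) + 1) / 2) = n + 1 := by ring
  have e3 : 1 - ((n : ℝ) + 1) = -n := by ring
  rw [e1, e2, e3, Gamma_nat_eq_factorial] at h
  have p1 : 0 < Gamma ((n : ℝ) / 2 + 1) := Gamma_pos_of_pos (by positivity)
  have p2 : 0 < Gamma (((n : ℝ) + 1) / 2) := Gamma_pos_of_pos (by positivity)
  have p3 : (0 : ℝ) < n.factorial := by positivity
  have p4 : (0 : ℝ) < 2 ^ (-(n : ℝ)) := by positivity
  have p5 : 0 < √π := by positivity
  have h' := congrArg log h
  rw [log_mul p2.ne' p1.ne', log_mul (by positivity) p5.ne', log_mul p3.ne' p4.ne',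
    log_rpow (by norm_num), log_sqrt pi_pos.le] at h'
  linarith

/-- Midpoint log-convexity of `Γ` on `[s, s + 1]`, with `Γ (s + 1) = s Γ s` substituted. -/
lemma log_Gamma_add_half_le {s : ℝ} (hs : 0 < s) :
    log (Gamma (s + 1 / 2)) ≤ log (Gamma s) + log s / 2 := by
  have hs1 : s + 1 ∈ Set.Ioi (0 : ℝ) := by simp only [Set.mem_Ioi]; linarith
  have h := convexOn_log_Gamma.2 (Set.mem_Ioi.2 hs) hs1
    (show (0 : ℝ) ≤ 1 / 2 by norm_num) (show (0 : ℝ) ≤ 1 / 2 by norm_num) (by norm_num)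
  have e : (1 / 2 : ℝ) • s + (1 / 2 : ℝ) • (s + 1) = s + 1 / 2 := by
    simp only [smul_eq_mul]; ring
  rw [e] at h
  simp only [Function.comp, smul_eq_mul] at h
  rw [Gamma_add_one hs.ne', log_mul hs.ne' (Gamma_pos_of_pos hs).ne'] at h
  linarith

lemma log_Gamma_half_sub_le (n : ℕ) :
    log (Gamma ((n : ℝ) / 2 + 1)) - log (Gamma (((n : ℝ) + 1) / 2)) ≤
      log (((n : ℝ) + 1) / 2) / 2 := by
  have h := log_Gamma_add_half_le (s := ((n : ℝ) + 1) / 2) (by positivity)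
  have e1 : ((n : ℝ) + 1) / 2 + 1 / 2 = (n : ℝ) / 2 + 1 := by ring
  rw [e1] at h
  linarith

lemma log_Gamma_half_sub_ge {n : ℕ} (hn : 0 < n) :
    log ((n : ℝ) / 2) / 2 ≤
      log (Gamma ((n : ℝ) / 2 + 1)) - log (Gamma (((n : ℝ) + 1) / 2)) := by
  have hs : 0 < (n : ℝ) / 2 := by positivity
  have h := log_Gamma_add_half_le hs
  have e1 : (n : ℝ) / 2 + 1 / 2 = ((n : ℝ) + 1) / 2 := by ring
  rw [e1] at h
  rw [Gamma_add_one hs.ne', log_mul hs.ne' (Gamma_pos_of_pos hs).ne']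
  linarith

lemma tendsto_log_div_nat : Tendsto (fun n : ℕ => log (n : ℝ) / n) atTop (nhds 0) := by
  have h := (isLittleO_log_id_atTop.tendsto_div_nhds_zero).comp tendsto_natCast_atTop_atTop
  simpa [Function.comp_def] using h

/-- The first-order form of Stirling's formula. -/
lemma tendsto_log_factorial_div :
    Tendsto (fun n : ℕ => log (n.factorial : ℝ) / n - log n) atTop (nhds (-1)) := by
  have h1 : Tendsto (fun n : ℕ => log (Stirling.stirlingSeq n)) atTop (nhds (log √π)) :=
    Stirling.tendsto_stirlingSeq_sqrt_pi.log (by positivity)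
  have h0 : Tendsto (fun n : ℕ => ((n : ℝ))⁻¹) atTop (nhds 0) :=
    tendsto_inv_atTop_zero.comp tendsto_natCast_atTop_atTop
  have h2 := ((h1.add_const (log 2 / 2)).mul h0).add
    ((tendsto_log_div_nat.div_const 2).sub_const 1)
  have e : (log √π + log 2 / 2) * 0 + (0 / 2 - 1) = -1 := by ring
  rw [e] at h2
  refine h2.congr' ?_
  filter_upwards [eventually_gt_atTop 0] with n hn
  have hn' : (0 : ℝ) < n := by exact_mod_cast hn
  rw [Stirling.log_stirlingSeq_formula, log_mul (by norm_num) hn'.ne',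
    log_div hn'.ne' (exp_pos 1).ne', log_exp]
  field_simp
  ring

lemma tendsto_log_Gamma_half_sub :
    Tendsto (fun n : ℕ => log (Gamma ((n : ℝ) / 2 + 1)) - log (Gamma (((n : ℝ) + 1) / 2))
      - log n / 2) atTop (nhds (-(log 2 / 2))) := by
  have h0 : Tendsto (fun n : ℕ => ((n : ℝ))⁻¹) atTop (nhds 0) :=
    tendsto_inv_atTop_zero.comp tendsto_natCast_atTop_atTop
  have h1 : Tendsto (fun n : ℕ => log (1 + ((n : ℝ))⁻¹) / 2 - log 2 / 2) atTop
      (nhds (-(log 2 / 2))) := by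
    have := (((h0.const_add 1).log (by norm_num)).div_const 2).sub_const (log 2 / 2)
    simpa using this
  refine tendsto_of_tendsto_of_tendsto_of_le_of_le' tendsto_const_nhds h1 ?_ ?_
  · filter_upwards [eventually_gt_atTop 0] with n hn
    have hn' : (0 : ℝ) < n := by exact_mod_cast hn
    have h := log_Gamma_half_sub_ge hn
    rw [log_div hn'.ne' (by norm_num)] at h
    linarith
  · filter_upwards [eventually_gt_atTop 0] with n hn
    have hn' : (0 : ℝ) < n := by exact_mod_cast hn
    have h := log_Gamma_half_sub_le n
    have e : ((n : ℝ) + 1) / 2 = n * (1 + (n : ℝ)⁻¹) / 2 := by field_simp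
    rw [e, log_div (by positivity) (by norm_num), log_mul hn'.ne' (by positivity)] at h
    rw [← e] at h
    linarith

lemma kappa_pos (n : ℕ) : 0 < kappa n :=
  div_pos (by positivity) (Gamma_pos_of_pos (by positivity))

lemma log_kappa (n : ℕ) :
    log (kappa n) = n / 2 * log π - log (Gamma ((n : ℝ) / 2 + 1)) := by
  rw [kappa, log_div (by positivity) (Gamma_pos_of_pos (by positivity)).ne', log_rpow pi_pos]

lemma log_kappa_pred {n : ℕ} (hn : 0 < n) :
    log (kappa (n - 1)) = ((n : ℝ) - 1) / 2 * log π - log (Gamma (((n : ℝ) + 1) / 2)) := by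
  rw [log_kappa, Nat.cast_pred hn]
  congr 3
  ring

/-- `(1/n) log M_n` rearranged into convergent pieces, all multiples of `log n` having
cancelled; `g` stands for `γ_n`. -/
lemma log_M_div_eq (lam α g : ℝ) (hg : 0 < g) {n : ℕ} (hn : 0 < n) :
    1 / (n : ℝ) * log ((n : ℝ) ^ ((n : ℝ) * (α - 1)) * exp ((n : ℝ) * lam) *
        (n.factorial : ℝ) * kappa n * (((n : ℝ) * kappa n) / (2 * g * kappa (n - 1))) ^ n) =
      lam + log π - log 2 / 2 + (log (n.factorial : ℝ) / n - log n) / 2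
        - log π / 4 * (n : ℝ)⁻¹
        - (log (Gamma ((n : ℝ) / 2 + 1)) - log (Gamma (((n : ℝ) + 1) / 2)) - log n / 2)
            * (n : ℝ)⁻¹ / 2
        - log n / n / 4
        - (log (Gamma ((n : ℝ) / 2 + 1)) - log (Gamma (((n : ℝ) + 1) / 2)) - log n / 2)
        - log (g / (n : ℝ) ^ α) := by
  have hn' : (0 : ℝ) < n := by exact_mod_cast hn
  have k1 := kappa_pos n
  have k2 := kappa_pos (n - 1)
  have hadd := log_Gamma_half_add n
  have hf : (0 : ℝ) < n.factorial := by positivity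
  have hr : (0 : ℝ) < (n : ℝ) ^ ((n : ℝ) * (α - 1)) := by positivity
  have hq : 0 < ((n : ℝ) * kappa n) / (2 * g * kappa (n - 1)) := by positivity
  rw [log_mul (by positivity) (by positivity), log_mul (by positivity) k1.ne',
    log_mul (by positivity) hf.ne', log_mul hr.ne' (exp_pos _).ne', log_exp, log_rpow hn',
    log_pow, log_div (by positivity) (by positivity), log_mul hn'.ne' k1.ne',
    log_mul (by positivity) k2.ne', log_mul (by norm_num) hg.ne', log_kappa, log_kappa_pred hn,
    log_div hg.ne' (by positivity), log_rpow hn']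
  have hF : log (n.factorial : ℝ) = log (Gamma ((n : ℝ) / 2 + 1)) +
      log (Gamma (((n : ℝ) + 1) / 2)) + n * log 2 - log π / 2 := by linarith
  rw [hF]
  field_simp
  ring

/-- Asymptotics and threshold for the expected number of data points in the zero cell:
`M_n = λ_n ⬝ n! κ_n (n κ_n / (2 γ_n κ_{n-1}))^n` with `λ_n = n^{n(α-1)} e^{nλ}`,
when `γ_n ∼ ρ n^α`. -/
theorem expected_points_zero_cell_threshold (ρ lam α : ℝ) (hρ : 0 < ρ)
    (γ : ℕ → ℝ) (hγpos : ∀ n, 0 < γ n)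
    (hγ : Tendsto (fun n : ℕ => γ n / (n : ℝ) ^ α) atTop (nhds ρ))
    (lamSeq M : ℕ → ℝ)
    (hlam : ∀ n : ℕ, lamSeq n = (n : ℝ) ^ ((n : ℝ) * (α - 1)) * Real.exp ((n : ℝ) * lam))
    (hM : ∀ n : ℕ, M n =
      lamSeq n * (n.factorial : ℝ) * kappa n *
        (((n : ℝ) * kappa n) / (2 * γ n * kappa (n - 1))) ^ n) :
    Tendsto (fun n : ℕ => (1 / (n : ℝ)) * Real.log (M n)) atTop
      (nhds (lam + Real.log Real.pi - Real.log ρ - 1 / 2)) ∧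
    (ρ > Real.exp lam * Real.pi / Real.sqrt (Real.exp 1) → Tendsto M atTop (nhds 0)) ∧
    (ρ < Real.exp lam * Real.pi / Real.sqrt (Real.exp 1) → Tendsto M atTop atTop) := by
  have hpos : ∀ n : ℕ, 0 < n → 0 < M n := by
    intro n hn
    have hn' : (0 : ℝ) < n := by exact_mod_cast hn
    have k1 := kappa_pos n
    have k2 := kappa_pos (n - 1)
    have hg := hγpos n
    rw [hM, hlam]
    positivity
  have h0 : Tendsto (fun n : ℕ => ((n : ℝ))⁻¹) atTop (nhds 0) :=
    tendsto_inv_atTop_zero.comp tendsto_natCast_atTop_atTop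
  have hL : Tendsto (fun n : ℕ => (1 / (n : ℝ)) * Real.log (M n)) atTop
      (nhds (lam + Real.log Real.pi - Real.log ρ - 1 / 2)) := by
    have hg := hγ.log hρ.ne'
    have hD := tendsto_log_Gamma_half_sub
    have h := (((((tendsto_log_factorial_div.div_const 2).const_add
      (lam + log π - log 2 / 2)).sub (h0.const_mul (log π / 4))).sub
      ((hD.mul h0).div_const 2)).sub (tendsto_log_div_nat.div_const 4)).sub hD |>.sub hg
    have e : lam + log π - log 2 / 2 + -1 / 2 - log π / 4 * 0 - -(log 2 / 2) * 0 / 2 - 0 / 4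
        - -(log 2 / 2) - log ρ = lam + log π - log ρ - 1 / 2 := by ring
    rw [e] at h
    refine h.congr' ?_
    filter_upwards [eventually_gt_atTop 0] with n hn
    rw [hM, hlam]
    exact (log_M_div_eq lam α (γ n) (hγpos n) hn).symm
  have hexp : (fun n : ℕ => exp ((n : ℝ) * ((1 / (n : ℝ)) * log (M n)))) =ᶠ[atTop] M := by
    filter_upwards [eventually_gt_atTop 0] with n hn
    have hn' : (0 : ℝ) < n := by exact_mod_cast hn
    rw [← mul_assoc, mul_one_div_cancel hn'.ne', one_mul, exp_log (hpos n hn)]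
  have hthr : log (exp lam * π / √(exp 1)) = lam + log π - 1 / 2 := by
    rw [log_div (by positivity) (by positivity), log_mul (by positivity) (by positivity),
      log_exp, log_sqrt (exp_pos 1).le, log_exp]
  refine ⟨hL, fun h => ?_, fun h => ?_⟩
  · have hlt := log_lt_log (by positivity) h
    rw [hthr] at hlt
    exact (tendsto_exp_atBot.comp
      (tendsto_natCast_atTop_atTop.atTop_mul_neg (by linarith) hL)).congr' hexp
  · have hlt := log_lt_log hρ h
    rw [hthr] at hlt
    exact (tendsto_exp_atTop.comp
      (tendsto_natCast_atTop_atTop.atTop_mul_pos (by linarith) hL)).congr' hexp
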